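/- Let p be a prime with p ≡ 3 (mod 4). Then Σ_{k=1}^{(p−3)/4} (k/p) > 0 if p ≡ 7 (mod 8) and Σ_{k=1}^{(p−3)/4} (k/p) = 0 if p ≡ 3 (mod 8); moreover, Σ_{k=(p+1)/4}^{(p−1)/2} (k/p) = 0 if p ≡ 7 (mod 8) and Σ_{k=(p+1)/4}^{(p−1)/2} (k/p) > 0 if p ≡ 3 (mod 8). In other words, among 1, …, (p−3)/4 there are as many quadratic residues as non-residues mod p when p ≡ 3 (mod 8) and more non-residues than residues when p ≡ 7 (mod 8), while among (p+1)/4, …, (p−1)/2 there are more residues than non-residues when p ≡ 3 (mod 8) and equally many when p ≡ 7 (mod 8). -/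

import Mathlib

/-!
Write `χ = (·/p)`, an odd character modulo `p`, let `H` be the sum of `χ` over the first half
`0 ≤ k < p / 2`, and let `S₁`, `S₂` be its sums over the first and the second quarter, so that
`H = S₁ + S₂`. Splitting `H` into even and odd `k` and reflecting the odd ones by `k ↦ p - k` gives
`H = χ(2) (S₁ - S₂)`. Hence `S₂ = 0` if `χ(2) = 1` and `S₁ = 0` if `χ(2) = -1`, the other sum being
`H`, and all that remains is `H > 0`.

The same reflections express `T = ∑ k χ(k)` over `0 ≤ k < p` through `H`, as
`χ(2) p H = (1 - 2 χ(2)) T`, so that `H > 0` amounts to `T < 0`. Now `T = -p L(0, χ)`: the Mellin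
transform of `F t = ∑ χ(n) exp (-n t)` is `Γ(s) L(s, χ)`, whence `L(0, χ) = F 0`. By the functional
equation, `L(0, χ) = τ L(1, χ) / (i π)` with `τ` the Gauss sum. Here `L(1, χ) > 0`, by the Euler
product and non-vanishing at `1`, and `τ = i √p`.

The value of `τ ^ 2` shows that `τ` is `±` Gauss's product of sines. If the sign were negative, the
Gauss sum plus the product, as an integral polynomial in the root of unity, would be divisible by
the `p`-th cyclotomic polynomial, hence modulo `p` by `(X - 1) ^ (p - 1)`. Applying
`(X d/dX) ^ ((p - 1) / 2)` and evaluating at `1` contradicts this, since by Wilson's theorem both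
terms become `-1`.
-/

open Finset Polynomial MeasureTheory Asymptotics Complex Filter Topology
open Set (Ioi EqOn)
open scoped Nat

theorem sum_range_two_mul_eq_even_add_odd {M : Type*} [AddCommMonoid M] (f : ℕ → M) (n : ℕ) :
    ∑ k ∈ range (2 * n), f k = ∑ k ∈ range n, f (2 * k) + ∑ k ∈ range n, f (2 * k + 1) := by
  induction n with
  | zero => simp
  | succ n ih =>
    rw [mul_add_one, sum_range_succ, sum_range_succ, ih, sum_range_succ, sum_range_succ]
    abel

section OddCharacterSums

variable {R : Type*} [CommRing R] {N : ℕ} {χ : DirichletCharacter R N}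

theorem apply_eq_neg_of_odd_of_add_eq (hχ : χ.Odd) {i j : ℕ} (hij : i + j = N) :
    χ i = -χ j := by
  have hneg : (i : ZMod N) = -j := by
    rw [eq_neg_iff_add_eq_zero, ← Nat.cast_add, hij, CharP.cast_eq_zero]
  rw [hneg, hχ.eval_neg]

theorem sum_mul_eq_two_mul_sum_half_sub [Nontrivial (ZMod N)] (hχ : χ.Odd) {m : ℕ}
    (hN : N = 2 * m + 1) :
    ∑ k ∈ range N, k * χ k =
      2 * ∑ k ∈ range (m + 1), k * χ k - N * ∑ k ∈ range (m + 1), χ k := by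
  have hext : ∑ k ∈ range (m + 1 + (m + 1)), k * χ k = ∑ k ∈ range N, k * χ k := by
    rw [show m + 1 + (m + 1) = N + 1 by omega, sum_range_succ]
    simp [MulChar.map_zero]
  rw [← hext, sum_range_add, ← sum_range_reflect (fun k ↦ ((m + 1 + k : ℕ) : R) * χ _), two_mul,
    add_sub_assoc, add_right_inj, mul_sum, ← sum_sub_distrib]
  refine sum_congr rfl fun k hk ↦ ?_
  have hk := mem_range.mp hk
  have hreflect : m + 1 + (m + 1 - 1 - k) + k = N := by omega
  rw [apply_eq_neg_of_odd_of_add_eq hχ hreflect]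
  have hcast := congrArg (Nat.cast : ℕ → R) hreflect
  push_cast at hcast ⊢
  linear_combination -χ k * hcast

theorem sum_mul_eq_apply_two_mul_sum_half_sub [Nontrivial (ZMod N)] (hχ : χ.Odd) {m : ℕ}
    (hN : N = 2 * m + 1) :
    ∑ k ∈ range N, k * χ k =
      χ 2 * (4 * ∑ k ∈ range (m + 1), k * χ k - N * ∑ k ∈ range (m + 1), χ k) := by
  have hext : ∑ k ∈ range (2 * (m + 1)), k * χ k = ∑ k ∈ range N, k * χ k := by
    rw [show 2 * (m + 1) = N + 1 by omega, sum_range_succ]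
    simp [MulChar.map_zero]
  rw [← hext, sum_range_two_mul_eq_even_add_odd,
    ← sum_range_reflect (fun k ↦ ((2 * k + 1 : ℕ) : R) * χ _), ← sum_add_distrib, mul_sum, mul_sum,
    ← sum_sub_distrib, mul_sum]
  refine sum_congr rfl fun k hk ↦ ?_
  have hk := mem_range.mp hk
  have hreflect : 2 * (m + 1 - 1 - k) + 1 + 2 * k = N := by omega
  rw [apply_eq_neg_of_odd_of_add_eq hχ hreflect]
  have hcast := congrArg (Nat.cast : ℕ → R) hreflect
  push_cast at hcast ⊢
  rw [map_mul]
  linear_combination -χ 2 * χ k * hcast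

theorem apply_two_mul_sum_half_eq [Nontrivial (ZMod N)] (hχ : χ.Odd) {m : ℕ}
    (hN : N = 2 * m + 1) :
    χ 2 * (N * ∑ k ∈ range (m + 1), χ k) = (1 - 2 * χ 2) * ∑ k ∈ range N, k * χ k := by
  linear_combination 2 * χ 2 * sum_mul_eq_two_mul_sum_half_sub hχ hN -
    sum_mul_eq_apply_two_mul_sum_half_sub hχ hN

theorem sum_half_eq_apply_two_mul_sub_quarters (hχ : χ.Odd) {t : ℕ} (hN : N = 4 * t + 3) :
    ∑ k ∈ range (2 * (t + 1)), χ k =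
      χ 2 * (∑ k ∈ range (t + 1), χ k - ∑ k ∈ range (t + 1), χ ↑(t + 1 + k)) := by
  rw [sum_range_two_mul_eq_even_add_odd, ← sum_range_reflect (fun k ↦ χ ↑(2 * k + 1)),
    ← sum_add_distrib, ← sum_sub_distrib, mul_sum]
  refine sum_congr rfl fun k hk ↦ ?_
  have hk := mem_range.mp hk
  have hreflect : 2 * (t + 1 - 1 - k) + 1 + 2 * (t + 1 + k) = N := by omega
  rw [apply_eq_neg_of_odd_of_add_eq hχ hreflect]
  simp only [Nat.cast_mul, Nat.cast_ofNat, map_mul]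
  ring

end OddCharacterSums

section EulerDerivation

variable {R : Type*} [CommRing R]

/-- The Euler operator `X * d/dX`, which multiplies `X ^ n` by `n`. -/
noncomputable def eulerOperator : R[X] →ₗ[R] R[X] :=
  LinearMap.mulLeft R X ∘ₗ derivative

theorem eulerOperator_apply (f : R[X]) : eulerOperator f = X * derivative f := rfl

theorem eulerOperator_pow_X_pow (m n : ℕ) :
    (eulerOperator ^ m) (X ^ n : R[X]) = (n : R) ^ m • X ^ n := by
  induction m with
  | zero => simp
  | succ m ih =>
    have hX : eulerOperator (X ^ n : R[X]) = (n : R) • X ^ n := by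
      cases n with
      | zero => simp [eulerOperator_apply]
      | succ n => simp [eulerOperator_apply, smul_eq_C_mul]; ring
    rw [pow_succ', Module.End.mul_apply, ih, map_smul, hX, smul_smul, pow_succ]

theorem eval_one_eulerOperator_pow_X_sub_one_pow_mul (m : ℕ) (f : R[X]) :
    ((eulerOperator ^ m) ((X - 1) ^ m * f)).eval 1 = m ! * f.eval 1 := by
  induction m generalizing f with
  | zero => simp
  | succ m ih =>
    have hstep : eulerOperator ((X - 1) ^ (m + 1) * f) =
        (X - 1) ^ m * (((m + 1 : R[X]) * X) * f + (X - 1) * (X * derivative f)) := by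
      simp only [eulerOperator_apply, derivative_mul, derivative_pow, derivative_sub, derivative_X,
        derivative_one, sub_zero, mul_one, map_natCast, map_add, map_one, Nat.add_sub_cancel,
        Nat.cast_add, Nat.cast_one]
      ring
    rw [pow_succ, Module.End.mul_apply, hstep, ih]
    simp [Nat.factorial_succ]
    ring

end EulerDerivation

section GaussProduct

/-- Gauss's product `∏ ζ ^ (m * k) * (1 - ζ ^ k)` over `1 ≤ k ≤ m`: for `ζ = exp (2πi/(2m+1))` it is
`∏ (ζ ^ (-k/2) - ζ ^ (k/2))` up to sign, with the half-integral exponents avoided. -/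
def gaussProduct {R : Type*} [CommRing R] (ζ : R) (m : ℕ) : R :=
  ∏ k ∈ range m, ζ ^ (m * (k + 1)) * (1 - ζ ^ (k + 1))

variable {R : Type*} [CommRing R]

theorem map_gaussProduct {S F : Type*} [CommRing S] [FunLike F R S] [RingHomClass F R S] (f : F)
    (ζ : R) (m : ℕ) : f (gaussProduct ζ m) = gaussProduct (f ζ) m := by
  simp [gaussProduct]

theorem sq_gaussProduct [IsDomain R] {ζ : R} {m : ℕ} (hζ : IsPrimitiveRoot ζ (2 * m + 1)) :
    gaussProduct ζ m ^ 2 = (-1) ^ m * (2 * m + 1) := by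
  have hfactor : ∀ k ∈ range m, (ζ ^ (m * (k + 1)) * (1 - ζ ^ (k + 1))) ^ 2 =
      -((1 - ζ ^ (k + 1)) * (1 - ζ ^ (m + (m - 1 - k) + 1))) := fun k hk ↦ by
    have hk : k < m := mem_range.mp hk
    have hinv : ζ ^ (m + (m - 1 - k) + 1) * ζ ^ (k + 1) = 1 := by
      rw [← pow_add, ← hζ.pow_eq_one]; congr 1; omega
    have hroot : (ζ ^ (m * (k + 1))) ^ 2 * ζ ^ (k + 1) = 1 := by
      rw [← pow_mul, ← pow_add, show m * (k + 1) * 2 + (k + 1) = (2 * m + 1) * (k + 1) by ring,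
        pow_mul, hζ.pow_eq_one, one_pow]
    linear_combination (1 - ζ ^ (k + 1)) ^ 2 * (ζ ^ (m + (m - 1 - k) + 1) * hroot -
      (ζ ^ (m * (k + 1))) ^ 2 * hinv) - (1 - ζ ^ (k + 1)) * hinv
  have hsplit : ∏ k ∈ range m, (1 - ζ ^ (k + 1)) * (1 - ζ ^ (m + (m - 1 - k) + 1)) = 2 * m + 1 := by
    rw [prod_mul_distrib, prod_range_reflect (fun k ↦ 1 - ζ ^ (m + k + 1)), ← prod_range_add
      (fun k ↦ 1 - ζ ^ (k + 1)), ← two_mul, hζ.prod_one_sub_pow_eq_order]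
    push_cast
    rfl
  rw [gaussProduct, ← prod_pow, prod_congr rfl hfactor, prod_neg, hsplit, card_range]

theorem gaussProduct_X_eq (m : ℕ) : gaussProduct (X : R[X]) m =
    (X - 1) ^ m * ∏ k ∈ range m, -(X ^ (m * (k + 1)) * ∑ j ∈ range (k + 1), X ^ j) := by
  calc gaussProduct (X : R[X]) m
      = ∏ k ∈ range m, (X - 1) * -(X ^ (m * (k + 1)) * ∑ j ∈ range (k + 1), X ^ j) :=
        prod_congr rfl fun k _ ↦ by
          linear_combination X ^ (m * (k + 1)) * mul_geom_sum (X : R[X]) (k + 1)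
    _ = _ := by rw [prod_mul_distrib, prod_const, card_range]

theorem eval_one_eulerOperator_pow_gaussProduct (m : ℕ) :
    ((eulerOperator ^ m) (gaussProduct (X : R[X]) m)).eval 1 = (-1) ^ m * m ! ^ 2 := by
  have hfact : ∏ k ∈ range m, ((k : R) + 1) = m ! := by
    rw [← prod_range_add_one_eq_factorial]; push_cast; rfl
  rw [gaussProduct_X_eq, eval_one_eulerOperator_pow_X_sub_one_pow_mul, eval_prod]
  simp only [eval_neg, eval_mul, eval_pow, eval_X, one_pow, eval_finsetSum, one_mul, sum_const,
    card_range, nsmul_eq_mul, mul_one, prod_neg, Nat.cast_add, Nat.cast_one, hfact]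
  ring

end GaussProduct

theorem neg_one_pow_mul_sq_factorial_half {p : ℕ} [Fact p.Prime] (hp : p ≠ 2) :
    ((-1) ^ (p / 2) * (p / 2) ! ^ 2 : ZMod p) = -1 := by
  have hodd : 2 * (p / 2) + 1 = p := Nat.two_mul_div_two_add_one_of_odd
    ((Fact.out : p.Prime).odd_of_ne_two hp)
  have hdesc : ((p - 1).descFactorial (p / 2) : ZMod p) = (-1) ^ (p / 2) * (p / 2) ! := by
    rw [Nat.descFactorial_eq_prod_range, ← prod_range_add_one_eq_factorial, Nat.cast_prod,
      Nat.cast_prod]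
    calc ∏ i ∈ range (p / 2), ((p - 1 - i : ℕ) : ZMod p)
        = ∏ i ∈ range (p / 2), -((i + 1 : ℕ) : ZMod p) := prod_congr rfl fun i hi ↦ by
          rw [eq_neg_iff_add_eq_zero, ← Nat.cast_add, show p - 1 - i + (i + 1) = p by grind,
            CharP.cast_eq_zero]
      _ = _ := by rw [prod_neg, card_range]
  have hprod : (p / 2) ! * (p - 1).descFactorial (p / 2) = (p - 1) ! := by
    have := Nat.factorial_mul_descFactorial (show p / 2 ≤ p - 1 by omega)
    rwa [show p - 1 - p / 2 = p / 2 by omega] at this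
  have hwilson := ZMod.wilsons_lemma p
  rw [← hprod, Nat.cast_mul, hdesc] at hwilson
  linear_combination hwilson

section GaussSumSign

variable {p : ℕ} [Fact p.Prime]

/-- The Legendre symbol `a ↦ (a/p)` as a Dirichlet character with values in a ring `R`. -/
abbrev legendreChar (R : Type*) [CommRing R] (p : ℕ) [Fact p.Prime] : DirichletCharacter R p :=
  (quadraticChar (ZMod p)).ringHomComp (Int.castRingHom R)

theorem legendreChar_ne_one {R : Type*} [CommRing R] [CharZero R] (hp : p ≠ 2) :
    legendreChar R p ≠ 1 :=
  (MulChar.ringHomComp_ne_one_iff Int.cast_injective).mpr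
    (quadraticChar_ne_one (by simpa [ZMod.ringChar_zmod_n]))

theorem legendreChar_isQuadratic {R : Type*} [CommRing R] : (legendreChar R p).IsQuadratic :=
  (quadraticChar_isQuadratic _).comp _

/-- The quadratic Gauss sum with the root of unity replaced by the indeterminate `X`. -/
noncomputable def gaussSumPolynomial (R : Type*) [CommRing R] (p : ℕ) [Fact p.Prime] : R[X] :=
  ∑ a : ZMod p, (quadraticChar (ZMod p) a : R[X]) * X ^ a.val

theorem map_gaussSumPolynomial {R S : Type*} [CommRing R] [CommRing S] (f : R →+* S) :
    (gaussSumPolynomial R p).map f = gaussSumPolynomial S p := by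
  simp [gaussSumPolynomial, Polynomial.map_sum]

theorem eval_one_eulerOperator_pow_gaussSumPolynomial (hp : p ≠ 2) :
    ((eulerOperator ^ (p / 2)) (gaussSumPolynomial (ZMod p) p)).eval 1 = -1 := by
  have hchar (a : ZMod p) : ((quadraticChar (ZMod p) a : ℤ) : ZMod p) = a ^ (p / 2) := by
    simpa using quadraticChar_eq_pow_of_char_ne_two' (F := ZMod p)
      (by simpa [ZMod.ringChar_zmod_n]) a
  have hterm (a : ZMod p) : ((eulerOperator ^ (p / 2))
      ((quadraticChar (ZMod p) a : (ZMod p)[X]) * X ^ a.val)).eval 1 = a ^ (p - 1) := by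
    rw [← zsmul_eq_mul, map_zsmul, eulerOperator_pow_X_pow]
    simp only [ZMod.natCast_zmod_val, eval_smul, eval_pow, eval_X, one_pow, smul_eq_mul, mul_one,
      zsmul_eq_mul, eval_mul, eval_intCast]
    rw [hchar, ← pow_add]
    congr 1
    have := (Fact.out : p.Prime).eq_two_or_odd
    omega
  have hpow (a : ZMod p) : a ^ (p - 1) = 1 - if a = 0 then 1 else 0 := by
    split_ifs with ha
    · simp [ha, Nat.sub_ne_zero_of_lt (Fact.out : p.Prime).one_lt]
    · simp [ZMod.pow_card_sub_one_eq_one ha]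
  rw [gaussSumPolynomial, map_sum, eval_finsetSum, sum_congr rfl fun a _ ↦ hterm a]
  simp [hpow]

theorem aeval_gaussSumPolynomial {R : Type*} [CommRing R] {ζ : R} (hζ : ζ ^ p = 1) :
    aeval ζ (gaussSumPolynomial ℤ p) = gaussSum (legendreChar R p) (AddChar.zmodChar p hζ) := by
  simp [gaussSumPolynomial, gaussSum, AddChar.zmodChar_apply]

theorem sq_gaussSum_legendreChar {R : Type*} [CommRing R] [IsDomain R] [CharZero R]
    {ψ : AddChar (ZMod p) R} (hp : p ≠ 2) (hψ : ψ.IsPrimitive) :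
    gaussSum (legendreChar R p) ψ ^ 2 = (-1) ^ (p / 2) * p := by
  have hchar : ringChar (ZMod p) ≠ 2 := by simpa [ZMod.ringChar_zmod_n]
  rw [gaussSum_sq (χ := legendreChar R p) (legendreChar_ne_one hp) legendreChar_isQuadratic hψ,
    MulChar.ringHomComp_apply, quadraticChar_neg_one hchar, ZMod.card,
    ZMod.χ₄_eq_neg_one_pow (((Fact.out : p.Prime).eq_two_or_odd).resolve_left hp)]
  simp

variable {K : Type*} [Field K] [CharZero K] {ζ : K}

theorem eval_one_eulerOperator_pow_eq_zero_of_aeval_eq_zero (hp : p ≠ 2)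
    (hζ : IsPrimitiveRoot ζ p) {f : ℤ[X]} (hf : aeval ζ f = 0) :
    ((eulerOperator ^ (p / 2)) (f.map (Int.castRingHom (ZMod p)))).eval 1 = 0 := by
  have hpos := (Fact.out : p.Prime).pos
  have hdvd : cyclotomic p ℤ ∣ f := by
    rw [cyclotomic_eq_minpoly hζ hpos]
    exact minpoly.isIntegrallyClosed_dvd (hζ.isIntegral hpos) hf
  have hcyc : cyclotomic p (ZMod p) = (X - 1) ^ (p - 1) := by
    simpa using cyclotomic_mul_prime_eq_pow_of_not_dvd (ZMod p) (p := p) (n := 1)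
      (by simpa using (Fact.out : p.Prime).ne_one)
  obtain ⟨g, hg⟩ := Polynomial.map_dvd (Int.castRingHom (ZMod p)) hdvd
  have := (Fact.out : p.Prime).two_le
  rw [hg, map_cyclotomic_int, hcyc, show p - 1 = p / 2 + (p - 1 - p / 2) by omega, pow_add,
    mul_assoc, eval_one_eulerOperator_pow_X_sub_one_pow_mul, eval_mul, eval_pow, eval_sub, eval_X,
    eval_one, sub_self, zero_pow (by omega), zero_mul, mul_zero]

theorem gaussSum_legendreChar_eq_gaussProduct (hp : p ≠ 2) (hζ : IsPrimitiveRoot ζ p) :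
    gaussSum (legendreChar K p) (AddChar.zmodChar p hζ.pow_eq_one) =
      gaussProduct ζ (p / 2) := by
  have hodd : 2 * (p / 2) + 1 = p := Nat.two_mul_div_two_add_one_of_odd
    ((Fact.out : p.Prime).odd_of_ne_two hp)
  have hsq : gaussSum (legendreChar K p) (AddChar.zmodChar p hζ.pow_eq_one) ^ 2 =
      gaussProduct ζ (p / 2) ^ 2 := by
    rw [sq_gaussSum_legendreChar hp (AddChar.zmodChar_primitive_of_primitive_root p hζ),
      sq_gaussProduct (hodd.symm ▸ hζ)]
    exact_mod_cast congrArg (fun n : ℕ ↦ ((-1) ^ (p / 2) * n : K)) hodd.symm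
  refine (sq_eq_sq_iff_eq_or_eq_neg.mp hsq).resolve_right fun hneg ↦ ?_
  have hroot : aeval ζ (gaussSumPolynomial ℤ p + gaussProduct X (p / 2)) = 0 := by
    rw [map_add, aeval_gaussSumPolynomial hζ.pow_eq_one, map_gaussProduct, aeval_X, hneg,
      neg_add_cancel]
  have hzero := eval_one_eulerOperator_pow_eq_zero_of_aeval_eq_zero hp hζ hroot
  rw [Polynomial.map_add, map_gaussSumPolynomial, ← coe_mapRingHom, map_gaussProduct,
    coe_mapRingHom, map_X, map_add, eval_add, eval_one_eulerOperator_pow_gaussSumPolynomial hp,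
    eval_one_eulerOperator_pow_gaussProduct, neg_one_pow_mul_sq_factorial_half hp] at hzero
  have : Fact (2 < p) := ⟨lt_of_le_of_ne (Fact.out : p.Prime).two_le hp.symm⟩
  exact ZMod.neg_one_ne_one (n := p) (by linear_combination hzero)

theorem prod_range_neg_one_pow_mul_I (m : ℕ) : ∏ k ∈ range m, ((-1) ^ k * I) = I ^ m ^ 2 := by
  induction m with
  | zero => simp
  | succ m ih => rw [prod_range_succ, ih, ← I_sq]; ring

theorem gaussProduct_exp_eq (m : ℕ) :
    gaussProduct (exp (2 * Real.pi * I / (2 * m + 1 : ℕ))) m =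
      I ^ m ^ 2 * (∏ k ∈ range m, 2 * Real.sin (Real.pi * (k + 1) / (2 * m + 1)) : ℝ) := by
  have hfactor (k : ℕ) : exp (2 * Real.pi * I / (2 * m + 1 : ℕ)) ^ (m * (k + 1)) *
        (1 - exp (2 * Real.pi * I / (2 * m + 1 : ℕ)) ^ (k + 1)) =
      (-1) ^ k * I * (2 * Real.sin (Real.pi * (k + 1) / (2 * m + 1)) : ℝ) := by
    have hm : (m * 2 + 1 : ℂ) ≠ 0 := by exact_mod_cast (m * 2).succ_ne_zero
    set x : ℂ := Real.pi * (k + 1) / (2 * m + 1) with hx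
    have hleft : exp (2 * Real.pi * I / (2 * m + 1 : ℕ)) ^ (m * (k + 1)) =
        (-1) ^ (k + 1) * exp (-x * I) := by
      rw [← exp_pi_mul_I, ← exp_nat_mul, ← exp_nat_mul, ← exp_add]
      congr 1
      rw [hx]
      push_cast
      field_simp
      ring
    have hright : exp (2 * Real.pi * I / (2 * m + 1 : ℕ)) ^ (k + 1) = exp (x * I) ^ 2 := by
      rw [← exp_nat_mul, ← exp_nat_mul]
      congr 1
      rw [hx]
      push_cast
      ring
    have hinv : exp (-x * I) * exp (x * I) = 1 := by rw [← exp_add]; simp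
    have hsin : ((2 * Real.sin (Real.pi * (k + 1) / (2 * m + 1)) : ℝ) : ℂ) =
        (exp (-x * I) - exp (x * I)) * I := by
      push_cast
      rw [← hx, two_sin]
    rw [hleft, hright, hsin]
    linear_combination (-1) ^ k * (exp (x * I) * hinv - (exp (-x * I) - exp (x * I)) * I_sq)
  rw [gaussProduct, prod_congr rfl fun k _ ↦ hfactor k, prod_mul_distrib,
    prod_range_neg_one_pow_mul_I, ofReal_prod]

theorem stdAddChar_eq_zmodChar {N : ℕ} [NeZero N] :
    (ZMod.stdAddChar : AddChar (ZMod N) ℂ) =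
      AddChar.zmodChar N (isPrimitiveRoot_exp N (NeZero.ne N)).pow_eq_one := by
  ext a
  rw [AddChar.zmodChar_apply, ← exp_nat_mul, ZMod.stdAddChar_apply, ZMod.toCircle_apply]
  ring_nf

theorem gaussSum_legendreChar_stdAddChar (hp : p ≠ 2) :
    gaussSum (legendreChar ℂ p) ZMod.stdAddChar = I ^ (p / 2) ^ 2 * √p := by
  have hodd : 2 * (p / 2) + 1 = p := Nat.two_mul_div_two_add_one_of_odd
    ((Fact.out : p.Prime).odd_of_ne_two hp)
  have hsq := sq_gaussSum_legendreChar hp (ZMod.isPrimitive_stdAddChar p)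
  obtain ⟨r, hr, hgauss⟩ : ∃ r : ℝ, 0 < r ∧
      gaussSum (legendreChar ℂ p) ZMod.stdAddChar = I ^ (p / 2) ^ 2 * r := by
    refine ⟨∏ k ∈ range (p / 2), 2 * Real.sin (Real.pi * (k + 1) / (2 * (p / 2 : ℕ) + 1)),
      prod_pos fun k hk ↦ ?_, ?_⟩
    · have hk : k < p / 2 := mem_range.mp hk
      have hx : (k + 1 : ℝ) < 2 * (p / 2 : ℕ) + 1 := by norm_cast; omega
      refine mul_pos two_pos (Real.sin_pos_of_pos_of_lt_pi (by positivity) ?_)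
      rw [div_lt_iff₀ (by positivity)]
      exact mul_lt_mul_of_pos_left hx Real.pi_pos
    · rw [stdAddChar_eq_zmodChar, gaussSum_legendreChar_eq_gaussProduct hp,
        ← gaussProduct_exp_eq, hodd]
      exact isPrimitiveRoot_exp p (NeZero.ne p)
  have hr_sq : r ^ 2 = p := by
    simpa [hgauss] using congrArg norm hsq
  rw [hgauss, ← hr_sq, Real.sqrt_sq hr.le]

end GaussSumSign

section PeriodicPowerSeries

variable {a : ℕ → ℂ} {N : ℕ}

theorem exists_norm_le_of_periodic (ha : Function.Periodic a N) (hN : N ≠ 0) :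
    ∃ C, ∀ n, ‖a n‖ ≤ C := by
  refine ⟨∑ i ∈ range N, ‖a i‖, fun n ↦ ?_⟩
  rw [← ha.map_mod_nat n]
  exact single_le_sum (f := fun i ↦ ‖a i‖) (fun _ _ ↦ norm_nonneg _)
    (mem_range.mpr (Nat.mod_lt n (Nat.pos_of_ne_zero hN)))

theorem hasSum_periodic_mul_pow (ha : Function.Periodic a N) (hN : N ≠ 0) {x : ℂ} (hx : ‖x‖ < 1) :
    HasSum (fun n ↦ a n * x ^ n) ((∑ i ∈ range N, a i * x ^ i) / (1 - x ^ N)) := by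
  obtain ⟨C, hC⟩ := exists_norm_le_of_periodic ha hN
  have hsum : Summable fun n ↦ a n * x ^ n := by
    refine .of_norm_bounded ((summable_geometric_of_lt_one (norm_nonneg x) hx).mul_left C) ?_
    intro n
    rw [norm_mul, norm_pow]
    exact mul_le_mul_of_nonneg_right (hC n) (by positivity)
  have hxN : 1 - x ^ N ≠ 0 := by
    refine sub_ne_zero.mpr fun h ↦ (pow_lt_one₀ (norm_nonneg x) hx hN).ne ?_
    rw [← norm_pow, ← h, norm_one]
  have hshift : ∑' n, a (n + N) * x ^ (n + N) = x ^ N * ∑' n, a n * x ^ n := by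
    rw [← tsum_mul_left]
    exact tsum_congr fun n ↦ by rw [ha n]; ring
  convert hsum.hasSum
  rw [div_eq_iff hxN]
  linear_combination hsum.sum_add_tsum_nat_add N - hshift

theorem sum_mul_pow_div_eq_of_sum_eq_zero {K : Type*} [Field K] {a : ℕ → K}
    (ha : ∑ i ∈ range N, a i = 0) {x : K} (hx : x ≠ 1) :
    (∑ i ∈ range N, a i * x ^ (i + 1)) / (1 - x ^ N) =
      -(∑ i ∈ range N, a i * ∑ j ∈ range (i + 1), x ^ j) / ∑ j ∈ range N, x ^ j := by
  have hnum : ∑ i ∈ range N, a i * x ^ (i + 1) =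
      (x - 1) * ∑ i ∈ range N, a i * ∑ j ∈ range (i + 1), x ^ j := by
    calc ∑ i ∈ range N, a i * x ^ (i + 1)
        = ∑ i ∈ range N, a i * (x ^ (i + 1) - 1) := by simp [mul_sub, ha]
      _ = _ := by
        rw [mul_sum]
        exact sum_congr rfl fun i _ ↦ by rw [← mul_geom_sum x (i + 1)]; ring
  rw [hnum, ← neg_sub (x ^ N), ← mul_geom_sum, ← mul_neg, mul_div_mul_left _ _ (sub_ne_zero.mpr hx),
    div_neg, neg_div]

end PeriodicPowerSeries

section MellinValue

theorem ofReal_exp_neg_isBigO_exp_neg :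
    (fun t : ℝ ↦ (Real.exp (-t) : ℂ)) =O[atTop] fun t ↦ Real.exp (-t) :=
  .of_norm_eventuallyLE (.of_forall fun t ↦ by simp [-ofReal_exp])

theorem hasMellin_const_mul_exp_neg (c : ℂ) {s : ℂ} (hs : 0 < s.re) :
    HasMellin (fun t : ℝ ↦ c * Real.exp (-t)) s (c * Gamma s) := by
  refine ⟨MellinConvergent.const_smul ?_ c, ?_⟩
  · simpa [MellinConvergent, mul_comm] using! GammaIntegral_convergent hs
  · rw [Gamma_eq_integral hs, GammaIntegral_eq_mellin]
    exact mellin_const_smul _ s c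

variable {F : ℝ → ℂ} {c : ℂ}

theorem mellinConvergent_of_isBigO_exp_neg (hF : ContinuousOn F (Ioi 0))
    (hF_top : F =O[atTop] fun t ↦ Real.exp (-t)) (hF_zero : (fun t ↦ F t - c) =O[𝓝[>] 0] fun t ↦ t)
    {s : ℂ} (hs : 0 < s.re) : MellinConvergent F s := by
  refine mellinConvergent_of_isBigO_rpow_exp (a := 1) (b := 0) one_pos
    (hF.locallyIntegrableOn measurableSet_Ioi) (by simpa using hF_top) ?_ hs
  have hid : (fun t : ℝ ↦ t) =O[𝓝[>] 0] fun _ ↦ (1 : ℝ) :=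
    (tendsto_id.mono_left nhdsWithin_le_nhds).isBigO_one ℝ
  simpa using (hF_zero.trans hid).add (isBigO_const_const c one_ne_zero _)

theorem differentiableOn_mellin_sub_const_mul_exp_neg (hF : ContinuousOn F (Ioi 0))
    (hF_top : F =O[atTop] fun t ↦ Real.exp (-t))
    (hF_zero : (fun t ↦ F t - c) =O[𝓝[>] 0] fun t ↦ t) :
    DifferentiableOn ℂ (mellin fun t ↦ F t - c * Real.exp (-t)) {s | -1 < s.re} := fun s hs ↦ by
  have hexp : (fun t : ℝ ↦ (Real.exp (-t) : ℂ) - 1) =O[𝓝[>] 0] fun t ↦ t := by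
    have hd : DifferentiableAt ℝ (fun t : ℝ ↦ (Real.exp (-t) : ℂ)) 0 := by fun_prop
    simpa using hd.isBigO_sub.mono nhdsWithin_le_nhds
  have hint : LocallyIntegrableOn (fun t ↦ F t - c * Real.exp (-t)) (Ioi 0) :=
    (hF.sub (by fun_prop)).locallyIntegrableOn measurableSet_Ioi
  refine (mellin_differentiableAt_of_isBigO_rpow_exp one_pos hint ?_ ?_ hs).differentiableWithinAt
  · simpa using hF_top.sub (ofReal_exp_neg_isBigO_exp_neg.const_mul_left c)
  · simp only [neg_neg, Real.rpow_one]
    exact (hF_zero.sub (hexp.const_mul_left c)).congr_left fun t ↦ by ring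

theorem eq_of_mellin_eq_Gamma_mul (hF : ContinuousOn F (Ioi 0))
    (hF_top : F =O[atTop] fun t ↦ Real.exp (-t))
    (hF_zero : (fun t ↦ F t - c) =O[𝓝[>] 0] fun t ↦ t) {L : ℂ → ℂ} (hL : Differentiable ℂ L)
    (h : ∀ s : ℂ, 1 < s.re → mellin F s = Gamma s * L s) : L 0 = c := by
  let M : ℂ → ℂ := mellin fun t ↦ F t - c * Real.exp (-t)
  have hM {s : ℂ} (hs : 1 < s.re) : M s = Gamma s * (L s - c) := by
    have hs0 : 0 < s.re := one_pos.trans hs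
    have hexp := hasMellin_const_mul_exp_neg c hs0
    have hsub :=
      hasMellin_sub (mellinConvergent_of_isBigO_exp_neg hF hF_top hF_zero hs0) hexp.1
    rw [show M s = _ from hsub.2, h s hs, hexp.2]
    ring
  have hdiff : DifferentiableOn ℂ (fun s ↦ (Gamma s)⁻¹ * M s) {s | -1 < s.re} :=
    differentiable_one_div_Gamma.differentiableOn.mul
      (differentiableOn_mellin_sub_const_mul_exp_neg hF hF_top hF_zero)
  have hopen (x : ℝ) : IsOpen {s : ℂ | x < s.re} := isOpen_lt continuous_const continuous_re
  have heq : EqOn (fun s ↦ (Gamma s)⁻¹ * M s) (fun s ↦ L s - c) {s | -1 < s.re} := by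
    refine (hdiff.analyticOnNhd (hopen _)).eqOn_of_preconnected_of_eventuallyEq
      ((hL.sub_const c).differentiableOn.analyticOnNhd (hopen _))
      (convex_halfSpace_re_gt _).isPreconnected (z₀ := 2) (by simp; norm_num) ?_
    filter_upwards [(hopen 1).mem_nhds (show 1 < (2 : ℂ).re by simp)] with s hs
    rw [hM hs, inv_mul_cancel_left₀ (Gamma_ne_zero_of_re_pos (one_pos.trans hs))]
  -- `1 / Γ` vanishes at `0`, which Mathlib encodes as `Γ 0 = 0` and `0⁻¹ = 0`.
  exact sub_eq_zero.mp (by simpa [Gamma_zero] using (heq (x := 0) (by simp)).symm)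

end MellinValue

theorem sum_range_natCast_zmod {N : ℕ} [NeZero N] {M : Type*} [AddCommMonoid M] (f : ZMod N → M) :
    ∑ i ∈ range N, f i = ∑ j, f j :=
  (sum_nbij' (fun j : ZMod N ↦ j.val) (fun i : ℕ ↦ (i : ZMod N)) (by simp [ZMod.val_lt]) (by simp)
    (by simp) (fun i hi ↦ ZMod.val_cast_of_lt (mem_range.mp hi)) (by simp)).symm

section LFunction

variable {N : ℕ} (Φ : ZMod N → ℂ)

/-- The function `∑ n ≥ 1, Φ n * exp (-n * t)` of `t > 0`, whose Mellin transform is `Γ` times the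
`L`-function of `Φ`, in the closed form that extends it smoothly across `t = 0` when
`∑ j, Φ j = 0`. -/
noncomputable def expSeries (Φ : ZMod N → ℂ) (t : ℝ) : ℂ :=
  -(∑ i ∈ range N, Φ ↑(i + 1) * ∑ j ∈ range (i + 1), (Real.exp (-t) : ℂ) ^ j) /
    ∑ j ∈ range N, (Real.exp (-t) : ℂ) ^ j

theorem expSeries_zero : expSeries Φ 0 = -(∑ i ∈ range N, (i + 1) * Φ ↑(i + 1)) / N := by
  simp [expSeries, mul_comm]

variable [NeZero N]

theorem mellin_eq_Gamma_mul_LFunction_of_hasSum {F : ℝ → ℂ}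
    (hF : ∀ t ∈ Ioi (0 : ℝ), HasSum (fun n : ℕ ↦ Φ ↑(n + 1) * Real.exp (-(n + 1 : ℝ) * t)) (F t))
    {s : ℂ} (hs : 1 < s.re) : mellin F s = Gamma s * ZMod.LFunction Φ s := by
  have hL : HasSum (fun n : ℕ ↦ Φ ↑(n + 1) / ((n + 1 : ℝ) : ℂ) ^ s) (ZMod.LFunction Φ s) := by
    rw [ZMod.LFunction_eq_LSeries Φ hs]
    have := (hasSum_nat_add_iff' 1).mpr (ZMod.LSeriesSummable_of_one_lt_re Φ hs).LSeriesHasSum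
    simpa [LSeries.term_def] using this
  have hnorm : Summable fun n : ℕ ↦ ‖Φ ↑(n + 1)‖ / (n + 1 : ℝ) ^ s.re := by
    refine hL.summable.norm.congr fun n ↦ ?_
    rw [norm_div, norm_cpow_eq_rpow_re_of_pos (by positivity)]
  have hmellin := hasSum_mellin (fun n ↦ .inr (by positivity)) (one_pos.trans hs) hF hnorm
  refine hmellin.unique ?_
  simpa only [mul_div_assoc] using hL.mul_left (Gamma s)

theorem differentiable_expSeries : Differentiable ℝ (expSeries Φ) := by
  have hgeom (t : ℝ) : ∑ j ∈ range N, (Real.exp (-t) : ℂ) ^ j ≠ 0 := by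
    norm_cast
    exact (sum_pos (fun j _ ↦ by positivity) (nonempty_range_iff.mpr (NeZero.ne N))).ne'
  intro t
  unfold expSeries
  refine .div ?_ ?_ (hgeom t) <;> fun_prop

variable {Φ} (hΦ : ∑ j, Φ j = 0)
include hΦ

theorem expSeries_eq_div {t : ℝ} (ht : t ≠ 0) :
    expSeries Φ t = (∑ i ∈ range N, Φ ↑(i + 1) * (Real.exp (-t) : ℂ) ^ (i + 1)) /
      (1 - (Real.exp (-t) : ℂ) ^ N) := by
  refine (sum_mul_pow_div_eq_of_sum_eq_zero ?_ ?_).symm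
  · simpa using (sum_range_natCast_zmod fun j ↦ Φ (j + 1)).trans
      ((Equiv.sum_comp (Equiv.addRight (1 : ZMod N)) Φ).trans hΦ)
  · norm_cast
    simpa using ht

theorem hasSum_expSeries {t : ℝ} (ht : 0 < t) :
    HasSum (fun n : ℕ ↦ Φ ↑(n + 1) * Real.exp (-(n + 1 : ℝ) * t)) (expSeries Φ t) := by
  have hper : Function.Periodic (fun n : ℕ ↦ Φ ↑(n + 1)) N := fun n ↦ by simp
  have hnorm : ‖(Real.exp (-t) : ℂ)‖ < 1 := by simpa [norm_exp] using ht
  rw [expSeries_eq_div hΦ ht.ne']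
  have hsum := (hasSum_periodic_mul_pow hper (NeZero.ne N) hnorm).mul_right (Real.exp (-t) : ℂ)
  rw [div_mul_eq_mul_div, sum_mul] at hsum
  simp only [mul_assoc, ← pow_succ] at hsum
  refine hsum.congr_fun fun n ↦ ?_
  rw [← ofReal_pow, ← Real.exp_nat_mul]
  push_cast
  ring_nf

theorem expSeries_isBigO_exp_neg : expSeries Φ =O[atTop] fun t ↦ Real.exp (-t) := by
  have hexp : Tendsto (fun t : ℝ ↦ (Real.exp (-t) : ℂ)) atTop (𝓝 0) := by
    simpa [-ofReal_exp] using! (continuous_ofReal.tendsto 0).comp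
      Real.tendsto_exp_neg_atTop_nhds_zero
  let f : ℂ → ℂ := fun x ↦ (∑ i ∈ range N, Φ ↑(i + 1) * x ^ i) / (1 - x ^ N)
  have hf : ContinuousAt f 0 := by
    refine .div (by fun_prop) (by fun_prop) (by simp [NeZero.ne N])
  have hbounded : (fun t : ℝ ↦ f (Real.exp (-t))) =O[atTop] fun _ ↦ (1 : ℝ) :=
    (hf.tendsto.comp hexp).isBigO_one ℝ
  have hfactor : expSeries Φ =ᶠ[atTop] fun t ↦ f (Real.exp (-t)) * Real.exp (-t) := by
    filter_upwards [eventually_gt_atTop 0] with t ht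
    rw [expSeries_eq_div hΦ ht.ne', div_mul_eq_mul_div, sum_mul]
    simp only [pow_succ, mul_assoc]
  simpa using hfactor.trans_isBigO (hbounded.mul ofReal_exp_neg_isBigO_exp_neg)

theorem LFunction_apply_zero :
    ZMod.LFunction Φ 0 = -(∑ i ∈ range N, (i + 1) * Φ ↑(i + 1)) / N := by
  rw [← expSeries_zero]
  have hdiff := differentiable_expSeries Φ
  refine eq_of_mellin_eq_Gamma_mul hdiff.continuous.continuousOn (expSeries_isBigO_exp_neg hΦ) ?_
    (ZMod.differentiable_LFunction_of_sum_zero hΦ) fun s hs ↦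
      mellin_eq_Gamma_mul_LFunction_of_hasSum Φ (fun t ht ↦ hasSum_expSeries hΦ ht) hs
  simpa using (hdiff 0).isBigO_sub.mono nhdsWithin_le_nhds

end LFunction

section QuadraticLValue

open scoped ComplexOrder

variable {N : ℕ} {χ : DirichletCharacter ℂ N}

theorem eulerFactor_nonneg (hχ : χ.IsQuadratic) {p : ℕ} (hp : p.Prime) {s : ℝ} (hs : 0 ≤ s) :
    0 ≤ (1 - χ p * (p : ℂ) ^ (-s : ℂ))⁻¹ := by
  have hpow : (p : ℂ) ^ (-s : ℂ) = ((p : ℝ) ^ (-s) : ℝ) := by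
    rw [ofReal_cpow (by positivity)]; simp
  have hle : (p : ℝ) ^ (-s) ≤ 1 :=
    Real.rpow_le_one_of_one_le_of_nonpos (by exact_mod_cast hp.one_le) (by linarith)
  have hnonneg : 0 ≤ (p : ℝ) ^ (-s) := by positivity
  rw [hpow]
  rcases hχ p with h | h | h <;> rw [h] <;> norm_cast <;> simp <;> linarith

variable [NeZero N]

theorem LFunction_nonneg_of_one_lt (hχ : χ.IsQuadratic) {s : ℝ} (hs : 1 < s) :
    0 ≤ χ.LFunction s := by
  rw [χ.LFunction_eq_LSeries (by simpa)]
  refine ge_of_tendsto' (χ.LSeries_eulerProduct (by simpa)) fun n ↦ prod_nonneg fun p hp ↦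
    eulerFactor_nonneg hχ (Nat.prime_of_mem_primesBelow hp) (by linarith)

theorem LFunction_apply_one_pos (hχ : χ.IsQuadratic) (hχ1 : χ ≠ 1) : 0 < χ.LFunction 1 := by
  refine lt_of_le_of_ne ?_ (χ.LFunction_apply_one_ne_zero hχ1).symm
  have hcont : Tendsto (fun s : ℝ ↦ χ.LFunction s) (𝓝[>] 1) (𝓝 (χ.LFunction (1 : ℝ))) :=
    ((χ.differentiable_LFunction hχ1).continuous.comp continuous_ofReal).continuousWithinAt
  rw [ofReal_one] at hcont
  exact ge_of_tendsto hcont (eventually_mem_nhdsWithin.mono fun s hs ↦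
    LFunction_nonneg_of_one_lt hχ hs)

theorem LFunction_apply_zero_eq_gaussSum_mul (hprim : χ.IsPrimitive) (hodd : χ.Odd) :
    χ.LFunction 0 = gaussSum χ ZMod.stdAddChar / (I * Real.pi) * χ⁻¹.LFunction 1 := by
  have hN1 : N ≠ 1 := by
    rintro rfl
    have : (1 : ℂ) = -1 := by
      simpa [DirichletCharacter.Odd, Subsingleton.elim (-1 : ZMod 1) 1] using hodd
    norm_num at this
  have hN : (N : ℂ) ^ (1 / 2 : ℂ) ≠ 0 := by simp [cpow_eq_zero_iff, NeZero.ne N]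
  have hinv : χ⁻¹.Odd := by
    rw [DirichletCharacter.Odd, MulChar.inv_apply_eq_inv', hodd, inv_neg_one]
  have hpi : (Real.pi : ℂ) ≠ 0 := mod_cast Real.pi_ne_zero
  have hfe := hprim.completedLFunction_one_sub 1
  rw [sub_self, DirichletCharacter.rootNumber, if_neg hodd.not_even, pow_one,
    show (1 : ℂ) - 1 / 2 = 1 / 2 by norm_num, mul_div_cancel₀ _ hN] at hfe
  rw [χ.LFunction_eq_completed_div_gammaFactor 0 (.inr hN1), hfe,
    χ⁻¹.LFunction_eq_completed_div_gammaFactor 1 (.inr hN1), hodd.gammaFactor_def,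
    hinv.gammaFactor_def, zero_add, Gammaℝ_one, one_add_one_eq_two, Gammaℝ_def]
  norm_num [cpow_neg_one]
  field_simp
  simp

end QuadraticLValue

section OddLegendreCharacter

open scoped ComplexOrder

variable {p : ℕ} [Fact p.Prime]

theorem quadraticChar_odd (hp : p % 4 = 3) :
    DirichletCharacter.Odd (quadraticChar (ZMod p) : DirichletCharacter ℤ p) := by
  rw [DirichletCharacter.Odd, quadraticChar_neg_one (by rw [ZMod.ringChar_zmod_n]; omega),
    ZMod.card, ZMod.χ₄_nat_three_mod_four hp]

theorem legendreChar_odd {R : Type*} [CommRing R] (hp : p % 4 = 3) : (legendreChar R p).Odd := by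
  rw [DirichletCharacter.Odd, MulChar.ringHomComp_apply, quadraticChar_odd hp]
  simp

theorem isPrimitive_of_ne_one {R : Type*} [CommMonoidWithZero R] {χ : DirichletCharacter R p}
    (hχ : χ ≠ 1) : χ.IsPrimitive := by
  have hcond := (Fact.out : p.Prime).eq_one_or_self_of_dvd _ χ.conductor_dvd_level
  exact hcond.resolve_left fun h ↦ hχ (χ.eq_one_iff_conductor_eq_one.mpr h)

theorem LFunction_legendreChar_apply_zero_pos (hp : p % 4 = 3) :
    0 < (legendreChar ℂ p).LFunction 0 := by
  have hp2 : p ≠ 2 := by omega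
  have hne := legendreChar_ne_one (R := ℂ) hp2
  have hI : (I : ℂ) ^ (p / 2) ^ 2 = I := by
    obtain ⟨t, ht⟩ : ∃ t, p / 2 = 2 * t + 1 := ⟨p / 4, by omega⟩
    rw [ht, show (2 * t + 1) ^ 2 = 4 * (t ^ 2 + t) + 1 by ring, pow_succ, pow_mul, I_pow_four,
      one_pow, one_mul]
  have hpos : (0 : ℂ) < ((√p / Real.pi : ℝ) : ℂ) := by
    have := (Fact.out : p.Prime).pos
    exact_mod_cast (by positivity : 0 < √(p : ℝ) / Real.pi)
  rw [LFunction_apply_zero_eq_gaussSum_mul (isPrimitive_of_ne_one hne) (legendreChar_odd hp),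
    legendreChar_isQuadratic.inv, gaussSum_legendreChar_stdAddChar hp2, hI,
    mul_div_mul_left _ _ I_ne_zero, ← ofReal_div]
  exact mul_pos hpos (LFunction_apply_one_pos legendreChar_isQuadratic hne)

theorem sum_mul_legendreSym_neg (hp : p % 4 = 3) :
    ∑ k ∈ range p, (k : ℤ) * legendreSym p k < 0 := by
  have hvalue := LFunction_apply_zero (Φ := legendreChar ℂ p)
    (MulChar.sum_eq_zero_of_ne_one (legendreChar_ne_one (by omega)))
  have hshift : ∑ k ∈ range p, ((k : ℂ) + 1) * legendreChar ℂ p ↑(k + 1) =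
      ((∑ k ∈ range p, (k : ℤ) * legendreSym p k : ℤ) : ℂ) := by
    have := (sum_range_succ' (fun k : ℕ ↦ (k : ℂ) * legendreChar ℂ p k) p).symm.trans
      (sum_range_succ _ _)
    simpa [legendreSym] using this
  have hp0 : (0 : ℂ) < p := by exact_mod_cast (Fact.out : p.Prime).pos
  have hpos := LFunction_legendreChar_apply_zero_pos hp
  rw [DirichletCharacter.LFunction, hvalue, hshift] at hpos
  have := (div_pos_iff_of_pos_right hp0).mp hpos
  exact_mod_cast neg_pos.mp this

theorem sum_half_legendreSym_pos (hp : p % 4 = 3) :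
    0 < ∑ k ∈ range (p / 2 + 1), legendreSym p k := by
  have htwo : (2 : ZMod p) ≠ 0 := Ring.two_ne_zero (by rw [ZMod.ringChar_zmod_n]; omega)
  have hrel := apply_two_mul_sum_half_eq (quadraticChar_odd hp) (m := p / 2) (by omega)
  have hneg := sum_mul_legendreSym_neg hp
  refine pos_of_mul_pos_right (a := (p : ℤ)) ?_ (Int.natCast_nonneg p)
  simp only [legendreSym, Int.cast_natCast] at hneg ⊢
  rcases quadraticChar_dichotomy htwo with h | h <;> rw [h] at hrel <;> linarith

theorem sum_half_legendreSym_eq {t : ℕ} (hp : p = 4 * t + 3) :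
    ∑ k ∈ range (2 * (t + 1)), legendreSym p k = legendreSym p 2 *
      (∑ k ∈ range (t + 1), legendreSym p k - ∑ k ∈ range (t + 1), legendreSym p ↑(t + 1 + k)) := by
  simpa [legendreSym] using sum_half_eq_apply_two_mul_sub_quarters (quadraticChar_odd (by omega)) hp

end OddLegendreCharacter

theorem legendre_partial_sums (p : ℕ) [Fact p.Prime] (h3 : p % 4 = 3) :
    (p % 8 = 7 → (∑ k ∈ Finset.Icc 1 ((p - 3) / 4), legendreSym p (k : ℤ)) > 0) ∧
    (p % 8 = 3 → (∑ k ∈ Finset.Icc 1 ((p - 3) / 4), legendreSym p (k : ℤ)) = 0) ∧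
    (p % 8 = 7 →
      (∑ k ∈ Finset.Icc ((p + 1) / 4) ((p - 1) / 2), legendreSym p (k : ℤ)) = 0) ∧
    (p % 8 = 3 →
      (∑ k ∈ Finset.Icc ((p + 1) / 4) ((p - 1) / 2), legendreSym p (k : ℤ)) > 0) := by
  obtain ⟨t, ht⟩ : ∃ t, p = 4 * t + 3 := ⟨p / 4, by omega⟩
  have hfirst : ∑ k ∈ Icc 1 ((p - 3) / 4), legendreSym p k =
      ∑ k ∈ range (t + 1), legendreSym p k := by
    rw [show (p - 3) / 4 = t by omega, ← Ico_add_one_right_eq_Icc,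
      sum_range_eq_add_Ico _ t.succ_pos]
    simp
  have hsecond : ∑ k ∈ Icc ((p + 1) / 4) ((p - 1) / 2), legendreSym p k =
      ∑ k ∈ range (t + 1), legendreSym p ↑(t + 1 + k) := by
    rw [show (p + 1) / 4 = t + 1 by omega, show (p - 1) / 2 = t + 1 + t by omega,
      ← Ico_add_one_right_eq_Icc, sum_Ico_eq_sum_range, add_assoc, Nat.add_sub_cancel_left]
  have hpos := sum_half_legendreSym_pos h3
  have hquarters := sum_half_legendreSym_eq ht
  have htwo := legendreSym.at_two (p := p) (by omega)
  have hodd : p % 2 = 1 := by omega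
  rw [ZMod.χ₈_nat_eq_if_mod_eight] at htwo
  rw [show p / 2 + 1 = 2 * (t + 1) by omega, two_mul, sum_range_add] at hpos
  rw [two_mul, sum_range_add] at hquarters
  rw [hfirst, hsecond]
  refine ⟨fun h ↦ ?_, fun h ↦ ?_, fun h ↦ ?_, fun h ↦ ?_⟩ <;>
  · simp only [h, hodd] at htwo
    norm_num at htwo
    rw [htwo] at hquarters
    linarith
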